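/- Fix ε ∈ (0, 1), δ ∈ (0, 1), Δ > 0, k ∈ ℕ, and a constant c > 0 with c² > 2 · ln(1.25/δ), and let σ ≥ c·Δ/ε. For a : Fin k → ℝ let μ_a denote the product measure on Fin k → ℝ whose i-th factor is the real Gaussian measure with mean a_i and variance σ². Then for all a, a' : Fin k → ℝ with √(∑_i (a_i − a'_i)²) ≤ Δ and every measurable set S ⊆ (Fin k → ℝ): μ_a(S) ≤ exp(ε) · μ_{a'}(S) + δ. -/

import Mathlib

open MeasureTheory ProbabilityTheory

/-- The Gaussian mechanism output distribution with center `a`: the product measure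
whose `i`-th factor is the real Gaussian measure with mean `a_i` and variance `σ²`. -/
noncomputable def gaussianMechanism (k : ℕ) (σ : ℝ) (a : Fin k → ℝ) :
    Measure (Fin k → ℝ) :=
  Measure.pi fun i => gaussianReal (a i) (⟨σ ^ 2, sq_nonneg σ⟩ : NNReal)

/-!
The mechanism with center `a` has density `exp L` with respect to the one with center `a'`, where
`L` is the privacy loss. Splitting an event along `L ≤ ε` and `ε < L` gives
`μ_a(S) ≤ exp ε * μ_a'(S) + μ_a(ε < L)`, so everything reduces to the tail of `L` under `μ_a`.
There `L` is itself Gaussian, with mean `w / 2` and variance `w = ‖a - a'‖² / σ²`. When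
`c * √w ≤ ε ≤ 1` its tail beyond `ε` is at most that of a standard Gaussian beyond
`z = c - 1 / (2 * c)`. For `0 ≤ z` that is at most
`exp (-z ^ 2 / 2) / 2 ≤ exp (1 / 2) / 2 * exp (-c ^ 2 / 2) ≤ 5 / 4 * exp (-c ^ 2 / 2)`,
and for `z < 0` the last bound is so weak that crude estimates suffice.
-/

open scoped ENNReal NNReal

section Measure

theorem withDensity_exp_apply_le {α : Type*} [MeasurableSpace α] (ν : Measure α) {L : α → ℝ}
    (hL : Measurable L) (ε : ℝ) {S : Set α} (hS : MeasurableSet S) :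
    ν.withDensity (fun x => .ofReal (Real.exp (L x))) S ≤
      .ofReal (Real.exp ε) * ν S +
        ν.withDensity (fun x => .ofReal (Real.exp (L x))) {x | ε < L x} := by
  set μ := ν.withDensity fun x => .ofReal (Real.exp (L x))
  have hB : MeasurableSet {x | ε < L x} := measurableSet_lt measurable_const hL
  have measure_good_le : μ (S \ {x | ε < L x}) ≤ .ofReal (Real.exp ε) * ν S :=
    calc μ (S \ {x | ε < L x})
      _ = ∫⁻ x in S \ {x | ε < L x}, .ofReal (Real.exp (L x)) ∂ν :=
        withDensity_apply _ (hS.diff hB)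
      _ ≤ ∫⁻ _ in S \ {x | ε < L x}, .ofReal (Real.exp ε) ∂ν :=
        setLIntegral_mono measurable_const fun x hx =>
          ENNReal.ofReal_le_ofReal (Real.exp_le_exp.2 (not_lt.1 hx.2))
      _ = .ofReal (Real.exp ε) * ν (S \ {x | ε < L x}) := setLIntegral_const _ _
      _ ≤ .ofReal (Real.exp ε) * ν S := by gcongr; exact Set.sdiff_subset
  calc μ S
    _ ≤ μ (S ∩ {x | ε < L x}) + μ (S \ {x | ε < L x}) := measure_le_inter_add_sdiff μ S _
    _ ≤ μ {x | ε < L x} + .ofReal (Real.exp ε) * ν S :=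
      add_le_add (measure_mono Set.inter_subset_right) measure_good_le
    _ = .ofReal (Real.exp ε) * ν S + μ {x | ε < L x} := add_comm _ _

variable {ι : Type*} [Fintype ι] {α : ι → Type*} [∀ i, MeasurableSpace (α i)]
  (μ : ∀ i, Measure (α i)) [∀ i, IsProbabilityMeasure (μ i)]

theorem lintegral_pi_prod {f : ∀ i, α i → ℝ≥0∞} (hf : ∀ i, Measurable (f i)) :
    ∫⁻ x, ∏ i, f i (x i) ∂Measure.pi μ = ∏ i, ∫⁻ y, f i y ∂μ i := by
  refine (lintegral_prod_eq_prod_lintegral_of_indepFun Finset.univ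
    (fun i (x : ∀ i, α i) => f i (x i)) (iIndepFun_pi fun i => (hf i).aemeasurable)
    fun i => (hf i).comp (measurable_pi_apply i)).trans ?_
  exact Finset.prod_congr rfl fun i _ => (measurePreserving_eval μ i).lintegral_comp (hf i)

theorem pi_withDensity {f : ∀ i, α i → ℝ≥0∞} (hf : ∀ i, Measurable (f i))
    [∀ i, SigmaFinite ((μ i).withDensity (f i))] :
    Measure.pi (fun i => (μ i).withDensity (f i)) =
      (Measure.pi μ).withDensity fun x => ∏ i, f i (x i) := by
  refine Measure.pi_eq fun s hs => ?_
  have indicator_eq_prod (x : ∀ i, α i) :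
      (Set.univ.pi s).indicator (fun x => ∏ i, f i (x i)) x =
        ∏ i, (s i).indicator (f i) (x i) := by
    by_cases hx : x ∈ Set.univ.pi s
    · rw [Set.indicator_of_mem hx]
      exact Finset.prod_congr rfl fun i _ => (Set.indicator_of_mem (hx i trivial) _).symm
    · obtain ⟨i, hi⟩ : ∃ i, x i ∉ s i := by simpa using hx
      rw [Set.indicator_of_notMem hx,
        Finset.prod_eq_zero (Finset.mem_univ i) (Set.indicator_of_notMem hi _)]
  calc (Measure.pi μ).withDensity (fun x => ∏ i, f i (x i)) (Set.univ.pi s)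
    _ = ∫⁻ x, ∏ i, (s i).indicator (f i) (x i) ∂Measure.pi μ := by
      rw [withDensity_apply _ (.univ_pi hs), ← lintegral_indicator (.univ_pi hs)]
      exact lintegral_congr indicator_eq_prod
    _ = ∏ i, ∫⁻ y, (s i).indicator (f i) y ∂μ i :=
      lintegral_pi_prod μ fun i => (hf i).indicator (hs i)
    _ = ∏ i, (μ i).withDensity (f i) (s i) := by
      simp only [withDensity_apply _ (hs _), lintegral_indicator (hs _)]

end Measure

section PrivacyLoss

/-- The privacy loss between `gaussianReal m v` and `gaussianReal m' v`, that is, the logarithm of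
the density of the former with respect to the latter. -/
noncomputable def gaussianPrivacyLoss (v : ℝ≥0) (m m' x : ℝ) : ℝ :=
  ((x - m') ^ 2 - (x - m) ^ 2) / (2 * v)

@[fun_prop]
theorem measurable_gaussianPrivacyLoss (v : ℝ≥0) (m m' : ℝ) :
    Measurable (gaussianPrivacyLoss v m m') := by
  unfold gaussianPrivacyLoss
  fun_prop

theorem gaussianReal_eq_withDensity_gaussianPrivacyLoss {v : ℝ≥0} (hv : v ≠ 0) (m m' : ℝ) :
    gaussianReal m v = (gaussianReal m' v).withDensity
      fun x => .ofReal (Real.exp (gaussianPrivacyLoss v m m' x)) := by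
  have pdf_eq (x : ℝ) : gaussianPDFReal m v x =
      gaussianPDFReal m' v x * Real.exp (gaussianPrivacyLoss v m m' x) := by
    simp only [gaussianPDFReal, gaussianPrivacyLoss, mul_assoc, ← Real.exp_add]
    congr 2
    ring
  rw [gaussianReal_of_var_ne_zero m hv, gaussianReal_of_var_ne_zero m' hv,
    ← withDensity_mul _ (measurable_gaussianPDF m' v) (by fun_prop)]
  congr 1 with x
  rw [Pi.mul_apply, gaussianPDF, gaussianPDF, pdf_eq,
    ENNReal.ofReal_mul (gaussianPDFReal_nonneg m' v x)]

theorem gaussianReal_map_gaussianPrivacyLoss {v : ℝ≥0} (hv : v ≠ 0) (m m' : ℝ) :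
    (gaussianReal m v).map (gaussianPrivacyLoss v m m') =
      gaussianReal ((‖m - m'‖₊ ^ 2 / v : ℝ≥0) / 2) (‖m - m'‖₊ ^ 2 / v) := by
  have hv' : (v : ℝ) ≠ 0 := NNReal.coe_ne_zero.2 hv
  have affine : gaussianPrivacyLoss v m m' =
      (· + (m' ^ 2 - m ^ 2) / (2 * v)) ∘ ((m - m') / v * ·) := by
    ext x
    simp only [gaussianPrivacyLoss, Function.comp_apply]
    field_simp
    ring
  rw [affine, ← Measure.map_map (by fun_prop) (by fun_prop), gaussianReal_map_const_mul,
    gaussianReal_map_add_const]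
  congr 1
  · push_cast
    rw [Real.norm_eq_abs, sq_abs]
    field_simp
    ring
  · ext
    push_cast
    rw [Real.norm_eq_abs, sq_abs]
    field_simp

variable {ι : Type*} [Fintype ι]

theorem pi_gaussianReal_map_sum (m : ι → ℝ) (v : ι → ℝ≥0) :
    (Measure.pi fun i => gaussianReal (m i) (v i)).map (fun x => ∑ i, x i) =
      gaussianReal (∑ i, m i) (∑ i, v i) := by
  apply Measure.ext_of_charFun
  have indep : iIndepFun (fun i (x : ι → ℝ) => x i)
      (Measure.pi fun i => gaussianReal (m i) (v i)) := iIndepFun_pi fun i => aemeasurable_id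
  rw [indep.charFun_map_fun_sum_eq_prod fun i => (measurable_pi_apply i).aemeasurable]
  ext t
  have map_eval (i : ι) : (Measure.pi fun i => gaussianReal (m i) (v i)).map (fun x => x i) =
      gaussianReal (m i) (v i) := (measurePreserving_eval _ i).map_eq
  simp only [Finset.prod_apply, map_eval, charFun_gaussianReal, ← Complex.exp_sum,
    Finset.sum_sub_distrib, Complex.ofReal_sum, NNReal.coe_sum, Finset.mul_sum, Finset.sum_mul,
    Finset.sum_div]

theorem pi_gaussianReal_eq_withDensity {v : ℝ≥0} (hv : v ≠ 0) (a a' : ι → ℝ) :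
    Measure.pi (fun i => gaussianReal (a i) v) =
      (Measure.pi fun i => gaussianReal (a' i) v).withDensity
        fun x => .ofReal (Real.exp (∑ i, gaussianPrivacyLoss v (a i) (a' i) (x i))) := by
  have density (i : ι) := gaussianReal_eq_withDensity_gaussianPrivacyLoss hv (a i) (a' i)
  have (i : ι) : SigmaFinite ((gaussianReal (a' i) v).withDensity
      fun x => .ofReal (Real.exp (gaussianPrivacyLoss v (a i) (a' i) x))) :=
    density i ▸ inferInstance
  simp only [density, Real.exp_sum, ENNReal.ofReal_prod_of_nonneg fun _ _ => (Real.exp_pos _).le]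
  exact pi_withDensity _ fun i => by fun_prop

theorem pi_gaussianReal_map_sum_gaussianPrivacyLoss {v : ℝ≥0} (hv : v ≠ 0) (a a' : ι → ℝ) :
    (Measure.pi fun i => gaussianReal (a i) v).map
        (fun x => ∑ i, gaussianPrivacyLoss v (a i) (a' i) (x i)) =
      gaussianReal (((∑ i, ‖a i - a' i‖₊ ^ 2) / v : ℝ≥0) / 2)
        ((∑ i, ‖a i - a' i‖₊ ^ 2) / v) := by
  have map_pi := Measure.pi_map_pi (μ := fun i => gaussianReal (a i) v)
    (f := fun i => gaussianPrivacyLoss v (a i) (a' i)) fun i => by fun_prop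
  simp only [gaussianReal_map_gaussianPrivacyLoss hv] at map_pi
  rw [Finset.sum_div, NNReal.coe_sum, Finset.sum_div, ← pi_gaussianReal_map_sum, ← map_pi,
    Measure.map_map (by fun_prop) (by fun_prop)]
  rfl

theorem pi_gaussianReal_apply_le_exp_mul_add {v : ℝ≥0} (hv : v ≠ 0) (a a' : ι → ℝ) (ε : ℝ)
    {S : Set (ι → ℝ)} (hS : MeasurableSet S) :
    Measure.pi (fun i => gaussianReal (a i) v) S ≤
      .ofReal (Real.exp ε) * Measure.pi (fun i => gaussianReal (a' i) v) S +
        gaussianReal (((∑ i, ‖a i - a' i‖₊ ^ 2) / v : ℝ≥0) / 2)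
          ((∑ i, ‖a i - a' i‖₊ ^ 2) / v) (Set.Ioi ε) := by
  rw [← pi_gaussianReal_map_sum_gaussianPrivacyLoss hv,
    Measure.map_apply (by fun_prop) measurableSet_Ioi, pi_gaussianReal_eq_withDensity hv a a']
  exact withDensity_exp_apply_le _ (by fun_prop) ε hS

end PrivacyLoss

theorem gaussianReal_Ioi_mean_le (m : ℝ) (v : ℝ≥0) :
    gaussianReal m v (Set.Ioi m) ≤ .ofReal (1 / 2) := by
  have reflect : gaussianReal m v (Set.Iio m) = gaussianReal m v (Set.Ioi m) := by
    have h := gaussianReal_map_const_sub (μ := m) (v := v) (2 * m)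
    rw [two_mul, add_sub_cancel_right] at h
    conv_lhs => rw [← h, Measure.map_apply (by fun_prop) measurableSet_Iio]
    congr 1 with x
    simp only [Set.mem_preimage, Set.mem_Iio, Set.mem_Ioi]
    constructor <;> intro <;> linarith
  have two_mul_le : gaussianReal m v (Set.Ioi m) * 2 ≤ 1 :=
    calc gaussianReal m v (Set.Ioi m) * 2
      _ = gaussianReal m v (Set.Iio m ∪ Set.Ioi m) := by
        rw [measure_union (Set.Iio_disjoint_Ioi_of_not_lt (lt_irrefl m)) measurableSet_Ioi,
          reflect, mul_two]
      _ ≤ 1 := prob_le_one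
  simpa using ENNReal.le_inv_iff_mul_le.2 two_mul_le

theorem gaussianReal_Ioi_add_le (m : ℝ) {v : ℝ≥0} (hv : v ≠ 0) {z : ℝ} (hz : 0 ≤ z) :
    gaussianReal m v (Set.Ioi (m + z)) ≤ .ofReal (Real.exp (-z ^ 2 / (2 * v)) * (1 / 2)) := by
  -- Moving the mean to the threshold `m + z` keeps a factor `1 / 2` that Chernoff's bound loses.
  have loss_le {x : ℝ} (hx : m + z < x) :
      gaussianPrivacyLoss v m (m + z) x ≤ -z ^ 2 / (2 * v) := by
    unfold gaussianPrivacyLoss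
    gcongr
    nlinarith
  calc gaussianReal m v (Set.Ioi (m + z))
    _ = ∫⁻ x in Set.Ioi (m + z), .ofReal (Real.exp (gaussianPrivacyLoss v m (m + z) x))
          ∂gaussianReal (m + z) v := by
      rw [gaussianReal_eq_withDensity_gaussianPrivacyLoss hv m (m + z),
        withDensity_apply _ measurableSet_Ioi]
    _ ≤ ∫⁻ _ in Set.Ioi (m + z), .ofReal (Real.exp (-z ^ 2 / (2 * v)))
          ∂gaussianReal (m + z) v :=
      setLIntegral_mono measurable_const fun x hx =>
        ENNReal.ofReal_le_ofReal (Real.exp_le_exp.2 (loss_le hx))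
    _ = .ofReal (Real.exp (-z ^ 2 / (2 * v))) * gaussianReal (m + z) v (Set.Ioi (m + z)) :=
      setLIntegral_const _ _
    _ ≤ .ofReal (Real.exp (-z ^ 2 / (2 * v)) * (1 / 2)) := by
      rw [ENNReal.ofReal_mul (Real.exp_pos _).le]
      gcongr
      exact gaussianReal_Ioi_mean_le _ _

theorem gaussianPDFReal_le_inv_sqrt (m : ℝ) (v : ℝ≥0) (x : ℝ) :
    gaussianPDFReal m v x ≤ (√(2 * Real.pi * v))⁻¹ := by
  refine mul_le_of_le_one_right (by positivity) (Real.exp_le_one_iff.2 ?_)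
  exact div_nonpos_of_nonpos_of_nonneg (neg_nonpos.2 (sq_nonneg _)) (by positivity)

theorem gaussianReal_apply_le_mul_volume (m : ℝ) {v : ℝ≥0} (hv : v ≠ 0) (s : Set ℝ) :
    gaussianReal m v s ≤ .ofReal (√(2 * Real.pi * v))⁻¹ * volume s := by
  rw [gaussianReal_apply m hv, ← setLIntegral_const]
  exact setLIntegral_mono measurable_const fun x _ =>
    ENNReal.ofReal_le_ofReal (gaussianPDFReal_le_inv_sqrt m v x)

theorem gaussianReal_Ioi_le_half_sub {z : ℝ} (hz : z ≤ 0) :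
    gaussianReal 0 1 (Set.Ioi z) ≤ .ofReal (1 / 2 - z) := by
  have inv_sqrt_le : (√(2 * Real.pi * (1 : ℝ≥0)))⁻¹ ≤ 1 := by
    refine inv_le_one_of_one_le₀ (Real.one_le_sqrt.2 ?_)
    rw [NNReal.coe_one]
    linarith [Real.pi_gt_three]
  have interval_le : gaussianReal 0 1 (Set.Ioc z 0) ≤ .ofReal (-z) :=
    calc gaussianReal 0 1 (Set.Ioc z 0)
      _ ≤ .ofReal (√(2 * Real.pi * (1 : ℝ≥0)))⁻¹ * volume (Set.Ioc z 0) :=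
        gaussianReal_apply_le_mul_volume 0 one_ne_zero _
      _ ≤ 1 * volume (Set.Ioc z 0) := by
        gcongr
        exact ENNReal.ofReal_le_one.2 inv_sqrt_le
      _ = .ofReal (-z) := by rw [one_mul, Real.volume_Ioc, zero_sub]
  calc gaussianReal 0 1 (Set.Ioi z)
    _ = gaussianReal 0 1 (Set.Ioi 0 ∪ Set.Ioc z 0) := by
      rw [Set.union_comm, Set.Ioc_union_Ioi_eq_Ioi hz]
    _ ≤ gaussianReal 0 1 (Set.Ioi 0) + gaussianReal 0 1 (Set.Ioc z 0) := measure_union_le _ _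
    _ ≤ .ofReal (1 / 2) + .ofReal (-z) := add_le_add (gaussianReal_Ioi_mean_le 0 1) interval_le
    _ = .ofReal (1 / 2 - z) := by
      rw [← ENNReal.ofReal_add (by norm_num) (neg_nonneg.2 hz), sub_eq_add_neg]

theorem exp_half_le : Real.exp (1 / 2) ≤ 5 / 2 := by
  have sq_eq : Real.exp (1 / 2) ^ 2 = Real.exp 1 := by rw [← Real.exp_nat_mul]; norm_num
  refine abs_le_of_sq_le_sq' ?_ (by norm_num) |>.2
  linarith [Real.exp_one_lt_d9]

theorem gaussianReal_Ioi_sub_inv_le_of_nonneg {c : ℝ} (hc : c ≠ 0) (hz : 0 ≤ c - 1 / (2 * c)) :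
    gaussianReal 0 1 (Set.Ioi (c - 1 / (2 * c))) ≤ .ofReal (5 / 4 * Real.exp (-c ^ 2 / 2)) := by
  have sq_le : c ^ 2 - 1 ≤ (c - 1 / (2 * c)) ^ 2 := by
    have expand : (c - 1 / (2 * c)) ^ 2 = c ^ 2 - 1 + (1 / (2 * c)) ^ 2 := by
      field_simp
      ring
    linarith [sq_nonneg (1 / (2 * c))]
  have tail := gaussianReal_Ioi_add_le 0 one_ne_zero hz
  rw [zero_add, NNReal.coe_one, mul_one] at tail
  refine tail.trans (ENNReal.ofReal_le_ofReal ?_)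
  calc Real.exp (-(c - 1 / (2 * c)) ^ 2 / 2) * (1 / 2)
    _ ≤ Real.exp (1 / 2 + -c ^ 2 / 2) * (1 / 2) := by
      refine mul_le_mul_of_nonneg_right (Real.exp_le_exp.2 ?_) (by norm_num)
      linarith
    _ = Real.exp (1 / 2) / 2 * Real.exp (-c ^ 2 / 2) := by rw [Real.exp_add]; ring
    _ ≤ 5 / 4 * Real.exp (-c ^ 2 / 2) :=
      mul_le_mul_of_nonneg_right (by linarith [exp_half_le]) (Real.exp_pos _).le

theorem gaussianReal_Ioi_sub_inv_le {c : ℝ} (hc : 0 < c) :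
    gaussianReal 0 1 (Set.Ioi (c - 1 / (2 * c))) ≤ .ofReal (5 / 4 * Real.exp (-c ^ 2 / 2)) := by
  rcases le_total 0 (c - 1 / (2 * c)) with hz | hz
  · exact gaussianReal_Ioi_sub_inv_le_of_nonneg hc.ne' hz
  have exp_ge : 1 - c ^ 2 / 2 ≤ Real.exp (-c ^ 2 / 2) := by
    linarith [Real.add_one_le_exp (-c ^ 2 / 2)]
  rcases le_total (c ^ 2) (2 / 5) with hc_small | hc_large
  · refine prob_le_one.trans (ENNReal.one_le_ofReal.2 ?_)
    linarith
  · refine (gaussianReal_Ioi_le_half_sub hz).trans (ENNReal.ofReal_le_ofReal ?_)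
    have sq_le : c ^ 2 ≤ 1 / 2 := by
      rw [sub_nonpos, le_div_iff₀ (by positivity)] at hz
      linarith
    have c_ge : 5 / 8 ≤ c := by nlinarith
    have inv_le : 1 / (2 * c) ≤ 4 / 5 := by
      rw [div_le_iff₀ (by positivity)]
      linarith
    linarith

theorem gaussianReal_eq_map_standard (m : ℝ) (v : ℝ≥0) :
    gaussianReal m v = (gaussianReal 0 1).map fun x => √v * x + m := by
  have scale := gaussianReal_map_const_mul (μ := 0) (v := 1) √v
  have shift := gaussianReal_map_add_const (μ := 0) (v := v) m
  have var_eq : NNReal.mk (√(v : ℝ) ^ 2) (sq_nonneg _) * 1 = v := by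
    ext
    simp
  rw [mul_zero, var_eq] at scale
  rw [zero_add, ← scale, Measure.map_map (by fun_prop) (by fun_prop)] at shift
  exact shift.symm

theorem gaussianReal_half_var_Ioi_le {c ε : ℝ} {w : ℝ≥0} (hc : 0 < c) (hε : ε ≤ 1)
    (hw : c * √w ≤ ε) :
    gaussianReal (w / 2) w (Set.Ioi ε) ≤ gaussianReal 0 1 (Set.Ioi (c - 1 / (2 * c))) := by
  rw [gaussianReal_eq_map_standard, Measure.map_apply (by fun_prop) measurableSet_Ioi]
  refine measure_mono fun x hx => ?_
  by_contra hx_le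
  rw [Set.mem_Ioi, not_lt] at hx_le
  have sqrt_le : √w ≤ 1 / c := by
    rw [le_div_iff₀ hc]
    linarith
  have loss_le : √w * x + w / 2 ≤ ε :=
    calc √w * x + w / 2
      _ ≤ √w * (c - 1 / (2 * c)) + w / 2 := by gcongr
      _ = c * √w + √w / 2 * (√w - 1 / c) := by
        nth_rw 2 [← Real.sq_sqrt w.coe_nonneg]
        field_simp
        ring
      _ ≤ c * √w := add_le_of_nonpos_right
        (mul_nonpos_of_nonneg_of_nonpos (by positivity) (sub_nonpos.2 sqrt_le))
      _ ≤ ε := hw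
  exact loss_le.not_gt hx

theorem five_fourths_mul_exp_neg_sq_le {c δ : ℝ} (hδ : 0 < δ)
    (hc : 2 * Real.log (1.25 / δ) ≤ c ^ 2) : 5 / 4 * Real.exp (-c ^ 2 / 2) ≤ δ := by
  have h : 1.25 / δ ≤ Real.exp (c ^ 2 / 2) := by
    rw [← Real.log_le_iff_le_exp (by positivity)]
    linarith
  rw [neg_div, Real.exp_neg, ← div_eq_mul_inv, div_le_comm₀ (Real.exp_pos _) hδ]
  norm_num at h ⊢
  exact h

/-- (ε, δ)-Differential Privacy Theorem for the Gaussian mechanism: with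
`c² > 2 ln(1.25/δ)` and `σ ≥ cΔ/ε`, for any two centers at ℓ₂-distance at most `Δ`
and any measurable set `S`, `μ_a(S) ≤ e^ε · μ_{a'}(S) + δ`. -/
theorem gaussian_mechanism_differential_privacy (ε δ Δ c σ : ℝ)
    (hε : ε ∈ Set.Ioo (0 : ℝ) 1) (hδ : δ ∈ Set.Ioo (0 : ℝ) 1) (hΔ : 0 < Δ)
    (hc : 0 < c) (hc2 : c ^ 2 > 2 * Real.log (1.25 / δ)) (hσ : σ ≥ c * Δ / ε)
    (k : ℕ) (a a' : Fin k → ℝ)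
    (hdist : Real.sqrt (∑ i, (a i - a' i) ^ 2) ≤ Δ)
    (S : Set (Fin k → ℝ)) (hS : MeasurableSet S) :
    gaussianMechanism k σ a S ≤
      ENNReal.ofReal (Real.exp ε) * gaussianMechanism k σ a' S + ENNReal.ofReal δ := by
  obtain ⟨hε0, hε1⟩ := hε
  have hσ0 : 0 < σ := (by positivity : 0 < c * Δ / ε).trans_le hσ
  set v : ℝ≥0 := ⟨σ ^ 2, sq_nonneg σ⟩
  have hv : v ≠ 0 := NNReal.coe_ne_zero.1 (pow_pos hσ0 2).ne'
  set w : ℝ≥0 := (∑ i, ‖a i - a' i‖₊ ^ 2) / v with hw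
  have sqrt_w : √w = √(∑ i, (a i - a' i) ^ 2) / σ := by
    have coe_w : (w : ℝ) = (∑ i, (a i - a' i) ^ 2) / σ ^ 2 := by
      rw [hw]
      push_cast
      simp only [Real.norm_eq_abs, sq_abs]
      rfl
    rw [coe_w, Real.sqrt_div' _ (sq_nonneg σ), Real.sqrt_sq hσ0.le]
  have c_mul_sqrt_w : c * √w ≤ ε :=
    calc c * √w
      _ ≤ c * (Δ / σ) := by rw [sqrt_w]; gcongr
      _ ≤ ε := by rwa [← mul_div_assoc, div_le_comm₀ hσ0 hε0]
  have tail : gaussianReal (w / 2) w (Set.Ioi ε) ≤ .ofReal δ :=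
    calc gaussianReal (w / 2) w (Set.Ioi ε)
      _ ≤ gaussianReal 0 1 (Set.Ioi (c - 1 / (2 * c))) :=
        gaussianReal_half_var_Ioi_le hc hε1.le c_mul_sqrt_w
      _ ≤ .ofReal (5 / 4 * Real.exp (-c ^ 2 / 2)) := gaussianReal_Ioi_sub_inv_le hc
      _ ≤ .ofReal δ := ENNReal.ofReal_le_ofReal (five_fourths_mul_exp_neg_sq_le hδ.1 hc2.le)
  exact (pi_gaussianReal_apply_le_exp_mul_add hv a a' ε hS).trans (by gcongr; rfl)
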